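/- arXiv:1712.09515 — 3 statements merged into one kernel-verified Lean document; each statement's English description precedes it below -/
import Mathlib

section
/- Fix 0 < T < ∞, α ∈ (1,2], δ ∈ [0, (α−1)/2) and η ∈ ((1+2δ+α)/(2α), 1). Then there exists a constant C > 0 such that for every t ∈ (0,T] and every v with |v|_{H^{−α/2}_2} < ∞, one has |e^{−A^{α/2} t} v|_{C^δ} ≤ C · t^{−η} · |v|_{H^{−α/2}_2}. -/
/-!
The estimate reduces to Cauchy-Schwarz on the spectral side. Write `λ = (k+1)π` and `c = fco v k`.

* `exp_neg_mul_le`: `exp (-s) ≤ s ^ (-η)` for `η ∈ [0,1]`, so the semigroup factor is at most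
  `t ^ (-η) * λ ^ (-αη)`.
* `abs_sineEig_sub_le`: the eigenfunctions are `δ`-Hölder with constant `2√2 λ ^ δ`.

Both the supremum and the Hölder seminorm of the semigroup are therefore controlled by
`t ^ (-η) * ∑ λ ^ (δ - αη) |c|`. By Cauchy-Schwarz (`weighted_sum_le`) this last sum is at most
`(∑ λ ^ (2δ + α - 2αη)) ^ (1/2) * hNorm (-(α/2)) v`, and the first factor is finite exactly because
`η > (1 + 2δ + α) / (2α)`.
-/

open Real MeasureTheory Set

noncomputable section

/-- `sineEig k` is the eigenfunction `e_{k+1}(x) = √2 sin((k+1)πx)` (0-based indexing). -/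
def sineEig (k : ℕ) (x : ℝ) : ℝ := Real.sqrt 2 * Real.sin (((k : ℝ) + 1) * Real.pi * x)

/-- Fourier sine coefficient `⟨v, e_{k+1}⟩ = ∫₀¹ v(x) e_{k+1}(x) dx`. -/
def fco (v : ℝ → ℝ) (k : ℕ) : ℝ := ∫ x in (0:ℝ)..1, v x * sineEig k x

/-- Fractional Dirichlet heat semigroup `e^{-A^{α/2} t} v`. -/
def heatSG (α t : ℝ) (v : ℝ → ℝ) (x : ℝ) : ℝ :=
  ∑' k : ℕ, Real.exp (-(((k : ℝ) + 1) * Real.pi) ^ α * t) * fco v k * sineEig k x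

/-- Spectral Sobolev `H^β₂(0,1)` norm. -/
def hNorm (β : ℝ) (v : ℝ → ℝ) : ℝ :=
  Real.sqrt (∑' k : ℕ, (((k : ℝ) + 1) * Real.pi) ^ (2 * β) * fco v k ^ 2)

/-- Membership in `H^β₂(0,1)` (finiteness of the spectral norm). -/
def memH (β : ℝ) (v : ℝ → ℝ) : Prop :=
  Summable fun k : ℕ => (((k : ℝ) + 1) * Real.pi) ^ (2 * β) * fco v k ^ 2

/-- Supremum norm on `[0,1]`. -/
def supIcc (v : ℝ → ℝ) : ℝ := ⨆ x : Icc (0:ℝ) 1, |v (x : ℝ)|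

/-- Hölder seminorm of exponent `δ` on `[0,1]`. -/
def holderSemi (δ : ℝ) (v : ℝ → ℝ) : ℝ :=
  ⨆ p : Icc (0:ℝ) 1 × Icc (0:ℝ) 1,
    |v (p.1 : ℝ) - v (p.2 : ℝ)| / |(p.1 : ℝ) - (p.2 : ℝ)| ^ δ

/-- The `C^δ(0,1)` norm: sup norm plus Hölder seminorm (just the sup norm when `δ = 0`). -/
def cNorm (δ : ℝ) (v : ℝ → ℝ) : ℝ :=
  if δ = 0 then supIcc v else supIcc v + holderSemi δ v

/-- Membership in `C^δ(0,1)`: continuity plus finite Hölder seminorm. -/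
def memC (δ : ℝ) (u : ℝ → ℝ) : Prop :=
  ContinuousOn u (Icc 0 1) ∧
    BddAbove (Set.range fun p : Icc (0:ℝ) 1 × Icc (0:ℝ) 1 =>
      |u (p.1 : ℝ) - u (p.2 : ℝ)| / |(p.1 : ℝ) - (p.2 : ℝ)| ^ δ)

/-- `L^p(0,1)` norm. -/
def lpNorm (p : ℝ) (v : ℝ → ℝ) : ℝ := (∫ x in (0:ℝ)..1, |v x| ^ p) ^ (1 / p)

/-- Galerkin projection `P_N v` onto the first `N` modes. -/
def galerkin (N : ℕ) (v : ℝ → ℝ) (x : ℝ) : ℝ :=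
  ∑ k ∈ Finset.range N, fco v k * sineEig k x

/-- Spectral `H^β₂` norm of `(1 - P_N) v`. -/
def tailHNorm (β : ℝ) (N : ℕ) (v : ℝ → ℝ) : ℝ :=
  Real.sqrt (∑' k : ℕ,
    if k < N then 0 else (((k : ℝ) + 1) * Real.pi) ^ (2 * β) * fco v k ^ 2)

/-- `(1 - P_N) e^{-A^{α/2} t} v`. -/
def tailSG (α t : ℝ) (N : ℕ) (v : ℝ → ℝ) (x : ℝ) : ℝ :=
  ∑' k : ℕ, if k < N then 0
    else Real.exp (-(((k : ℝ) + 1) * Real.pi) ^ α * t) * fco v k * sineEig k x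

/-- Cosine coefficient `∫₀¹ g(x) √2 cos((k+1)πx) dx`. -/
def cco (g : ℝ → ℝ) (k : ℕ) : ℝ :=
  ∫ x in (0:ℝ)..1, g x * (Real.sqrt 2 * Real.cos (((k : ℝ) + 1) * Real.pi * x))

/-- Spectral `H^{-α/2}₂` norm of the distributional derivative `∂ₓ g`. -/
def dxHNorm (α : ℝ) (g : ℝ → ℝ) : ℝ :=
  Real.sqrt (∑' k : ℕ, (((k : ℝ) + 1) * Real.pi) ^ (2 - α) * cco g k ^ 2)


/-- Frequency `(k+1)π` of the eigenfunction `sineEig k`; its square is the Laplace eigenvalue. -/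
def freq (k : ℕ) : ℝ := ((k : ℝ) + 1) * Real.pi

lemma one_le_freq (k : ℕ) : 1 ≤ freq k := by
  have h1 : (1 : ℝ) ≤ (k : ℝ) + 1 := by linarith [(Nat.cast_nonneg k : (0 : ℝ) ≤ k)]
  have h2 : (1 : ℝ) ≤ Real.pi := by linarith [Real.pi_gt_three]
  unfold freq
  nlinarith

lemma freq_pos (k : ℕ) : 0 < freq k := lt_of_lt_of_le one_pos (one_le_freq k)

lemma summable_freq_rpow {p : ℝ} (hp : p < -1) : Summable fun k : ℕ => freq k ^ p := by
  have h0 : Summable fun k : ℕ => (((k + 1 : ℕ) : ℝ)) ^ p :=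
    (summable_nat_add_iff 1).2 (Real.summable_nat_rpow.2 hp)
  refine (h0.mul_right (Real.pi ^ p)).congr fun k => ?_
  unfold freq
  rw [Real.mul_rpow (by positivity) Real.pi_pos.le]
  push_cast
  rfl

/-- Polynomial decay of the semigroup factor, from `s ^ η ≤ max 1 s ≤ exp s`. -/
lemma exp_neg_mul_le {α η t l : ℝ} (hη0 : 0 ≤ η) (hη1 : η ≤ 1) (ht : 0 < t) (hl : 0 < l) :
    Real.exp (-l ^ α * t) ≤ t ^ (-η) * l ^ (-(α * η)) := by
  have hla : 0 < l ^ α := Real.rpow_pos_of_pos hl α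
  have hs : 0 < l ^ α * t := mul_pos hla ht
  have key : (l ^ α * t) ^ η ≤ Real.exp (l ^ α * t) := by
    rcases le_total (l ^ α * t) 1 with h | h
    · exact (Real.rpow_le_one hs.le h hη0).trans (Real.one_le_exp hs.le)
    · calc (l ^ α * t) ^ η ≤ (l ^ α * t) ^ (1 : ℝ) := Real.rpow_le_rpow_of_exponent_le h hη1
        _ = l ^ α * t := Real.rpow_one _
        _ ≤ Real.exp (l ^ α * t) := by linarith [Real.add_one_le_exp (l ^ α * t)]
  have h2 : t ^ (-η) * l ^ (-(α * η)) = ((l ^ α * t) ^ η)⁻¹ := by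
    rw [Real.mul_rpow hla.le ht.le, ← Real.rpow_mul hl.le, Real.rpow_neg ht.le,
      Real.rpow_neg hl.le, mul_inv, mul_comm]
  rw [h2, neg_mul, Real.exp_neg]
  exact inv_anti₀ (Real.rpow_pos_of_pos hs η) key

lemma abs_sineEig_le (k : ℕ) (x : ℝ) : |sineEig k x| ≤ Real.sqrt 2 := by
  unfold sineEig
  rw [abs_mul, abs_of_nonneg (Real.sqrt_nonneg 2)]
  exact mul_le_of_le_one_right (Real.sqrt_nonneg 2) (Real.abs_sin_le_one _)

/-- Interpolation between `|sin a - sin b| ≤ 2` and the Lipschitz bound. -/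
lemma abs_sin_sub_sin_le {δ : ℝ} (h0 : 0 ≤ δ) (h1 : δ ≤ 1) (a b : ℝ) :
    |Real.sin a - Real.sin b| ≤ 2 * |a - b| ^ δ := by
  have hnn : 0 ≤ |a - b| := abs_nonneg _
  rcases le_total |a - b| 1 with h | h
  · have hlip : |Real.sin a - Real.sin b| ≤ |a - b| := by
      have := Real.lipschitzWith_sin.dist_le_mul a b
      simpa [Real.dist_eq] using this
    have h3 : |a - b| ≤ |a - b| ^ δ := by
      rcases hnn.eq_or_lt with hz | hp
      · rw [← hz]
        exact Real.rpow_nonneg le_rfl δ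
      · simpa using Real.rpow_le_rpow_of_exponent_ge hp h h1
    have h4 : 0 ≤ |a - b| ^ δ := Real.rpow_nonneg hnn δ
    linarith
  · have h2 : |Real.sin a - Real.sin b| ≤ 2 := by
      rw [abs_le]
      constructor <;>
        linarith [Real.sin_le_one a, Real.sin_le_one b, Real.neg_one_le_sin a,
          Real.neg_one_le_sin b]
    linarith [Real.one_le_rpow h h0]

lemma abs_sineEig_sub_le {δ : ℝ} (h0 : 0 ≤ δ) (h1 : δ ≤ 1) (k : ℕ) (x y : ℝ) :
    |sineEig k x - sineEig k y| ≤ 2 * Real.sqrt 2 * freq k ^ δ * |x - y| ^ δ := by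
  have h := abs_sin_sub_sin_le h0 h1 (freq k * x) (freq k * y)
  rw [← mul_sub, abs_mul, abs_of_pos (freq_pos k),
    Real.mul_rpow (freq_pos k).le (abs_nonneg _)] at h
  calc |sineEig k x - sineEig k y|
      = Real.sqrt 2 * |Real.sin (freq k * x) - Real.sin (freq k * y)| := by
        unfold sineEig freq
        rw [← mul_sub, abs_mul, abs_of_nonneg (Real.sqrt_nonneg 2)]
    _ ≤ Real.sqrt 2 * (2 * (freq k ^ δ * |x - y| ^ δ)) :=
        mul_le_mul_of_nonneg_left h (Real.sqrt_nonneg 2)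
    _ = _ := by ring

/-- Cauchy-Schwarz against the dual Sobolev weight: the series `∑ λ ^ q |c|` converges and is
bounded by the `H^β₂` norm as soon as `∑ λ ^ (2(q - β))` converges. -/
lemma weighted_sum_le {β q : ℝ} (hq : 2 * (q - β) < -1) {v : ℝ → ℝ} (hv : memH β v) :
    (Summable fun k : ℕ => freq k ^ q * |fco v k|) ∧
      ∑' k : ℕ, freq k ^ q * |fco v k| ≤
        Real.sqrt (∑' k : ℕ, freq k ^ (2 * (q - β))) * hNorm β v := by
  have e1 : ∀ k : ℕ, (freq k ^ (q - β)) ^ (2 : ℝ) = freq k ^ (2 * (q - β)) := fun k => by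
    rw [← Real.rpow_mul (freq_pos k).le, mul_comm]
  have e2 : ∀ k : ℕ, (freq k ^ β * |fco v k|) ^ (2 : ℝ) = freq k ^ (2 * β) * fco v k ^ 2 :=
    fun k => by
      rw [Real.mul_rpow (Real.rpow_nonneg (freq_pos k).le _) (abs_nonneg _),
        ← Real.rpow_mul (freq_pos k).le, mul_comm β, Real.rpow_two, sq_abs]
  have e3 : ∀ k : ℕ,
      freq k ^ (q - β) * (freq k ^ β * |fco v k|) = freq k ^ q * |fco v k| := fun k => by
    rw [← mul_assoc, ← Real.rpow_add (freq_pos k), sub_add_cancel]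
  have hf : Summable fun k : ℕ => (freq k ^ (q - β)) ^ (2 : ℝ) :=
    (summable_freq_rpow hq).congr fun k => (e1 k).symm
  have hg : Summable fun k : ℕ => (freq k ^ β * |fco v k|) ^ (2 : ℝ) :=
    Summable.congr hv fun k => (e2 k).symm
  have h := Real.summable_and_inner_le_Lp_mul_Lq_tsum_of_nonneg Real.HolderConjugate.two_two
    (fun k => Real.rpow_nonneg (freq_pos k).le (q - β))
    (fun k => mul_nonneg (Real.rpow_nonneg (freq_pos k).le β) (abs_nonneg (fco v k))) hf hg
  simp only [e1, e2, e3] at h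
  rw [← Real.sqrt_eq_rpow, ← Real.sqrt_eq_rpow] at h
  exact h

/-- Termwise comparison: replacing the eigenfunctions by any sequence `a` with `|a k| ≤ M λ ^ δ`,
the semigroup series is dominated by `M t ^ (-η) ∑ λ ^ (δ - αη) |c|`. -/
lemma semigroup_series_le {α δ η t M : ℝ} (hη0 : 0 ≤ η) (hη1 : η ≤ 1) (ht : 0 < t)
    {v : ℝ → ℝ} {a : ℕ → ℝ} (ha : ∀ k, |a k| ≤ M * freq k ^ δ)
    (hs : Summable fun k : ℕ => freq k ^ (δ - α * η) * |fco v k|) :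
    (Summable fun k : ℕ => Real.exp (-freq k ^ α * t) * fco v k * a k) ∧
      |∑' k : ℕ, Real.exp (-freq k ^ α * t) * fco v k * a k| ≤
        M * t ^ (-η) * ∑' k : ℕ, freq k ^ (δ - α * η) * |fco v k| := by
  have hb : ∀ k : ℕ, ‖Real.exp (-freq k ^ α * t) * fco v k * a k‖ ≤
      M * t ^ (-η) * (freq k ^ (δ - α * η) * |fco v k|) := fun k => by
    rw [Real.norm_eq_abs, abs_mul, abs_mul, abs_of_pos (Real.exp_pos _)]
    calc Real.exp (-freq k ^ α * t) * |fco v k| * |a k|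
        ≤ (t ^ (-η) * freq k ^ (-(α * η))) * |fco v k| * (M * freq k ^ δ) :=
          mul_le_mul
            (mul_le_mul_of_nonneg_right (exp_neg_mul_le hη0 hη1 ht (freq_pos k)) (abs_nonneg _))
            (ha k) (abs_nonneg _)
            (mul_nonneg (mul_nonneg (Real.rpow_nonneg ht.le _)
              (Real.rpow_nonneg (freq_pos k).le _)) (abs_nonneg _))
      _ = _ := by
          rw [sub_eq_add_neg, Real.rpow_add (freq_pos k)]
          ring
  have hS := hs.mul_left (M * t ^ (-η))
  refine ⟨hS.of_norm_bounded hb, ?_⟩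
  rw [← tsum_mul_left, ← Real.norm_eq_abs]
  exact tsum_of_norm_bounded hS.hasSum hb

/-- smoothing estimate from `H^{-α/2}₂` to `C^δ`. -/
theorem stmt2 (T α δ η : ℝ) (hT : 0 < T) (hα : α ∈ Set.Ioc (1:ℝ) 2)
    (hδ : δ ∈ Set.Ico (0:ℝ) ((α - 1)/2))
    (hη : η ∈ Set.Ioo ((1 + 2*δ + α)/(2*α)) 1) :
    ∃ C > 0, ∀ t ∈ Set.Ioc (0:ℝ) T, ∀ v : ℝ → ℝ, memH (-(α/2)) v →
      cNorm δ (heatSG α t v) ≤ C * t ^ (-η) * hNorm (-(α/2)) v := by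
  obtain ⟨hα1, hα2⟩ := hα
  obtain ⟨hδ0, hδ1⟩ := hδ
  obtain ⟨hη1, hη2⟩ := hη
  have hα0 : 0 < α := by linarith
  rw [div_lt_iff₀ (by linarith)] at hη1
  have hη0 : 0 ≤ η := by
    by_contra! h
    nlinarith
  have hδ2 : δ ≤ 1 := by linarith
  set S : ℝ := Real.sqrt (∑' k : ℕ, freq k ^ (2 * (δ - α * η - -(α / 2)))) with hS
  have hS0 : 0 ≤ S := Real.sqrt_nonneg _
  -- `√2` from the supremum, `2√2` from the seminorm; `S + 1` instead of `S` gives positivity.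
  refine ⟨3 * Real.sqrt 2 * (S + 1), by positivity, ?_⟩
  rintro t ⟨ht, -⟩ v hv
  obtain ⟨hsum, hle⟩ := weighted_sum_le (q := δ - α * η) (by linarith) hv
  rw [← hS] at hle
  set K : ℝ := ∑' k : ℕ, freq k ^ (δ - α * η) * |fco v k| with hK
  have hK0 : 0 ≤ K :=
    tsum_nonneg fun k => mul_nonneg (Real.rpow_nonneg (freq_pos k).le _) (abs_nonneg _)
  have htη : 0 ≤ t ^ (-η) := Real.rpow_nonneg ht.le _
  have hs2 : 0 ≤ Real.sqrt 2 := Real.sqrt_nonneg 2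
  have hN : 0 ≤ hNorm (-(α / 2)) v := Real.sqrt_nonneg _
  have hpt : ∀ x, (Summable fun k : ℕ => Real.exp (-freq k ^ α * t) * fco v k * sineEig k x) ∧
      |heatSG α t v x| ≤ Real.sqrt 2 * t ^ (-η) * K := fun x =>
    semigroup_series_le hη0 hη2.le ht (fun k => (abs_sineEig_le k x).trans
      (le_mul_of_one_le_right hs2 (Real.one_le_rpow (one_le_freq k) hδ0))) hsum
  have hdiff : ∀ x y, |heatSG α t v x - heatSG α t v y| ≤
      2 * Real.sqrt 2 * t ^ (-η) * K * |x - y| ^ δ := fun x y => by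
    have h := (semigroup_series_le (a := fun k => sineEig k x - sineEig k y)
      (M := 2 * Real.sqrt 2 * |x - y| ^ δ) hη0 hη2.le ht (fun k => by
        refine (abs_sineEig_sub_le hδ0 hδ2 k x y).trans_eq ?_
        ring) hsum).2
    have e : heatSG α t v x - heatSG α t v y =
        ∑' k : ℕ, Real.exp (-freq k ^ α * t) * fco v k * (sineEig k x - sineEig k y) := by
      simp only [mul_sub]
      exact ((hpt x).1.tsum_sub (hpt y).1).symm
    rw [e]
    refine h.trans_eq ?_
    rw [← hK]
    ring
  have : Nonempty (Icc (0 : ℝ) 1) := ⟨⟨0, by simp⟩⟩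
  have hsup : supIcc (heatSG α t v) ≤ Real.sqrt 2 * t ^ (-η) * K :=
    ciSup_le fun x => (hpt x).2
  have hhol : holderSemi δ (heatSG α t v) ≤ 2 * Real.sqrt 2 * t ^ (-η) * K :=
    ciSup_le fun p => div_le_of_le_mul₀ (Real.rpow_nonneg (abs_nonneg _) _) (by positivity)
      (hdiff p.1 p.2)
  have hpos : 0 ≤ Real.sqrt 2 * t ^ (-η) * K := by positivity
  have hc : cNorm δ (heatSG α t v) ≤ 3 * Real.sqrt 2 * t ^ (-η) * K := by
    unfold cNorm
    split_ifs <;> linarith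
  calc cNorm δ (heatSG α t v) ≤ 3 * Real.sqrt 2 * t ^ (-η) * K := hc
    _ ≤ 3 * Real.sqrt 2 * t ^ (-η) * ((S + 1) * hNorm (-(α / 2)) v) :=
        mul_le_mul_of_nonneg_left (by linarith) (by positivity)
    _ = 3 * Real.sqrt 2 * (S + 1) * t ^ (-η) * hNorm (-(α / 2)) v := by ring
end
end

section
/- Let α ∈ (1,2], δ ∈ (1 − α/2, 1), and let f: ℝ → ℝ be a polynomial. Then for every R > 0 there exists a constant C_R > 0 such that for all u, v ∈ C^δ(0,1) with |u|_{C^δ} ≤ R and |v|_{C^δ} ≤ R, one has |F(u) − F(v)|_{H^{−α/2}_2} ≤ C_R · |u − v|_{C^δ}; equivalently, (Σ_{k≥1} (kπ)^{2−α} (∫₀¹ (f(u(x)) − f(v(x))) √2·cos(kπx) dx)²)^{1/2} ≤ C_R · |u − v|_{C^δ}. -/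
/-!
The estimate splits into a nonlinear and a linear part.

* Nonlinear part (`holderBd_eval_sub`). `C^δ` is an algebra, so by induction on the polynomial `f`,
  the function `g = f(u) - f(v)` has `C^δ` norm at most `K * |u - v|_{C^δ}`, with `K` depending only
  on `f` and on the bound `R` for `u` and `v`.
* Linear part (`tsum_cco_le`). If `0 ≤ s < 2δ`, then `∑ (kπ)^s c_k(g)² ≤ D |g|²_{C^δ}` for the cosine
  coefficients `c_k(g)`. Here `s = 2 - α`, and `s < 2δ` is the hypothesis `δ > 1 - α/2`.

For the linear part, extend `g` to an even 2-periodic function `G`, that is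
`G(t) = g(‖t‖)` on the circle `ℝ/2ℤ`; since the norm is 1-Lipschitz, `G` is again `δ`-Hölder. The
increment `G(· + h) - G` has sup norm at most `|g|_{C^δ} h^δ`, and its `n`-th Fourier coefficient is
`(e^{iπnh} - 1)` times that of `G`. Taking `h = 2^{-(j+1)}`, the factor has modulus at least `1` for
`2^j ≤ n < 2^{j+1}`, so Bessel's inequality bounds the sum of the squared coefficients over this
dyadic block by `|g|²_{C^δ} h^{2δ}` (`sum_block_le`). With the weight `n^s`, the blocks are dominated
by a geometric series of ratio `2^{s - 2δ} < 1`.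
-/

open Real MeasureTheory Set

noncomputable section

/-! ### Hölder bounds and polynomial superposition -/

/-- `w` is continuous on `[0,1]`, with sup norm and `δ`-Hölder seminorm there both at most `M`. -/
def HolderBd (δ M : ℝ) (w : ℝ → ℝ) : Prop :=
  ContinuousOn w (Icc 0 1) ∧ (∀ x ∈ Icc (0:ℝ) 1, |w x| ≤ M) ∧
    ∀ x ∈ Icc (0:ℝ) 1, ∀ y ∈ Icc (0:ℝ) 1, |w x - w y| ≤ M * |x - y| ^ δ

lemma HolderBd.nonneg {δ M : ℝ} {w : ℝ → ℝ} (h : HolderBd δ M w) : 0 ≤ M :=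
  (abs_nonneg _).trans (h.2.1 0 (by simp))

lemma HolderBd.add {δ M N : ℝ} {w z : ℝ → ℝ} (hw : HolderBd δ M w) (hz : HolderBd δ N z) :
    HolderBd δ (M + N) (fun x => w x + z x) := by
  refine ⟨hw.1.add hz.1, fun x hx => ?_, fun x hx y hy => ?_⟩
  · exact (abs_add_le _ _).trans (add_le_add (hw.2.1 x hx) (hz.2.1 x hx))
  · have h1 := hw.2.2 x hx y hy
    have h2 := hz.2.2 x hx y hy
    calc |w x + z x - (w y + z y)| = |(w x - w y) + (z x - z y)| := by ring_nf
      _ ≤ |w x - w y| + |z x - z y| := abs_add_le _ _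
      _ ≤ (M + N) * |x - y| ^ δ := by linarith

lemma HolderBd.mul {δ M N : ℝ} {w z : ℝ → ℝ} (hw : HolderBd δ M w) (hz : HolderBd δ N z) :
    HolderBd δ (2 * (M * N)) (fun x => w x * z x) := by
  have hM := hw.nonneg
  have hN := hz.nonneg
  have hMN := mul_nonneg hM hN
  refine ⟨hw.1.mul hz.1, fun x hx => ?_, fun x hx y hy => ?_⟩
  · rw [abs_mul]
    have := mul_le_mul (hw.2.1 x hx) (hz.2.1 x hx) (abs_nonneg _) hM
    linarith
  · have h1 := mul_le_mul (hw.2.2 x hx y hy) (hz.2.1 x hx) (abs_nonneg _)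
      (by positivity)
    have h2 := mul_le_mul (hw.2.1 y hy) (hz.2.2 x hx y hy) (abs_nonneg _) hM
    calc |w x * z x - w y * z y| = |(w x - w y) * z x + w y * (z x - z y)| := by ring_nf
      _ ≤ |w x - w y| * |z x| + |w y| * |z x - z y| := by
        rw [← abs_mul, ← abs_mul]; exact abs_add_le _ _
      _ ≤ 2 * (M * N) * |x - y| ^ δ := by linarith

lemma HolderBd.mono {δ M N : ℝ} {w : ℝ → ℝ} (hw : HolderBd δ M w) (h : M ≤ N) :
    HolderBd δ N w :=
  ⟨hw.1, fun x hx => (hw.2.1 x hx).trans h, fun x hx y hy =>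
    (hw.2.2 x hx y hy).trans (by gcongr)⟩

lemma holderBd_const (δ c : ℝ) : HolderBd δ |c| (fun _ => c) :=
  ⟨continuousOn_const, fun _ _ => le_rfl, fun x _ y _ => by simp; positivity⟩

lemma memC.sub {δ : ℝ} {u v : ℝ → ℝ} (hu : memC δ u) (hv : memC δ v) :
    memC δ (fun x => u x - v x) := by
  obtain ⟨hu, A, hA⟩ := hu
  obtain ⟨hv, B, hB⟩ := hv
  refine ⟨hu.sub hv, A + B, ?_⟩
  rintro _ ⟨p, rfl⟩
  have h1 := hA ⟨p, rfl⟩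
  have h2 := hB ⟨p, rfl⟩
  refine le_trans ?_ (add_le_add h1 h2)
  simp only
  rw [← add_div]
  gcongr
  calc _ = |(u p.1 - u p.2) - (v p.1 - v p.2)| := by ring_nf
    _ ≤ _ := abs_sub _ _

/-- For `u ∈ C^δ` the suprema defining `cNorm` are taken over bounded families, so they are genuine
upper bounds and not junk values. -/
lemma memC.holderBd {δ : ℝ} (hδ : δ ≠ 0) {u : ℝ → ℝ} (hu : memC δ u) :
    HolderBd δ (cNorm δ u) u := by
  obtain ⟨hc, hB⟩ := hu
  have hs : 0 ≤ supIcc u := Real.iSup_nonneg fun _ => abs_nonneg _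
  have hh : 0 ≤ holderSemi δ u := Real.iSup_nonneg fun _ => by positivity
  have hb : BddAbove (Set.range fun x : Icc (0:ℝ) 1 => |u (x : ℝ)|) := by
    obtain ⟨C, hC⟩ := isCompact_Icc.exists_bound_of_continuousOn hc
    exact ⟨C, by rintro _ ⟨x, rfl⟩; exact hC x x.2⟩
  simp only [cNorm, if_neg hδ]
  refine ⟨hc, fun x hx => ?_, fun x hx y hy => ?_⟩
  · have := le_ciSup hb ⟨x, hx⟩
    change |u x| ≤ supIcc u at this
    linarith
  · rcases eq_or_ne x y with rfl | hxy
    · simp [Real.zero_rpow hδ]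
    · have := le_ciSup hB (⟨x, hx⟩, ⟨y, hy⟩)
      change |u x - u y| / |x - y| ^ δ ≤ holderSemi δ u at this
      have hp : 0 < |x - y| ^ δ := Real.rpow_pos_of_pos (abs_pos.2 (sub_ne_zero.2 hxy)) _
      rw [div_le_iff₀ hp] at this
      nlinarith

/-- Composition with a polynomial is bounded and Lipschitz on bounded sets of `C^δ`. The bound on
`f ∘ u` is carried along because the difference `f(u)u - f(v)v` is split as
`(f(u) - f(v))u + f(v)(u - v)`. -/
lemma holderBd_eval_sub (δ R : ℝ) (f : Polynomial ℝ) : ∃ K ≥ 0, ∀ (u v : ℝ → ℝ) (N : ℝ),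
    HolderBd δ R u → HolderBd δ R v → HolderBd δ N (fun x => u x - v x) →
    HolderBd δ K (fun x => f.eval (v x)) ∧
      HolderBd δ (K * N) (fun x => f.eval (u x) - f.eval (v x)) := by
  by_cases hR : 0 ≤ R
  swap
  · exact ⟨0, le_rfl, fun u v N hu => absurd hu.nonneg hR⟩
  induction f using Polynomial.induction_on with
  | C a =>
    refine ⟨|a|, abs_nonneg _, fun u v N hu hv hN => ?_⟩
    have := hN.nonneg
    exact ⟨by simpa using holderBd_const δ a,
      by simpa using (holderBd_const δ 0).mono (by simp; positivity)⟩
  | add p q hp hq =>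
    obtain ⟨K, hK, hp⟩ := hp
    obtain ⟨L, hL, hq⟩ := hq
    refine ⟨K + L, by positivity, fun u v N hu hv hN => ?_⟩
    obtain ⟨p1, p2⟩ := hp u v N hu hv hN
    obtain ⟨q1, q2⟩ := hq u v N hu hv hN
    refine ⟨by simpa using p1.add q1, ?_⟩
    convert p2.add q2 using 2
    · ring
    · simp; ring
  | monomial n a ih =>
    obtain ⟨K, hK, ih⟩ := ih
    refine ⟨2 * (K * R) + 2 * K, by positivity, fun u v N hu hv hN => ?_⟩
    obtain ⟨h1, h2⟩ := ih u v N hu hv hN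
    refine ⟨?_, ?_⟩
    · convert (h1.mul hv).mono (show _ ≤ 2 * (K * R) + 2 * K by linarith) using 2
      simp; ring
    · convert (h2.mul hu).add (h1.mul hN) using 2
      · ring
      · simp; ring

/-! ### Cosine coefficients and the even periodic extension -/

instance factTwoPos : Fact ((0:ℝ) < 2) := ⟨two_pos⟩

/-- The 2-periodic even extension of `g|_[0,1]`: on the circle `ℝ/2ℤ` the norm of (the class of)
`x ∈ [-1,1]` is `|x|`. -/
def evenExt (g : ℝ → ℝ) (t : AddCircle (2:ℝ)) : ℂ := (g ‖t‖ : ℂ)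

lemma norm_mem_Icc (t : AddCircle (2:ℝ)) : ‖t‖ ∈ Icc (0:ℝ) 1 :=
  ⟨norm_nonneg _, by simpa using AddCircle.norm_le_half_period (2:ℝ) (x := t) two_ne_zero⟩

lemma continuous_evenExt {g : ℝ → ℝ} (hg : ContinuousOn g (Icc 0 1)) :
    Continuous (evenExt g) :=
  Complex.continuous_ofReal.comp (hg.comp_continuous continuous_norm norm_mem_Icc)

lemma norm_evenExt_shift_le {δ M : ℝ} (hδ : 0 < δ) {g : ℝ → ℝ} (hg : HolderBd δ M g) {h : ℝ}
    (hh : 0 ≤ h) (t : AddCircle (2:ℝ)) :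
    ‖evenExt g (t + (h : AddCircle (2:ℝ))) - evenExt g t‖ ≤ M * h ^ δ := by
  rw [evenExt, evenExt, ← Complex.ofReal_sub, Complex.norm_real, Real.norm_eq_abs]
  refine (hg.2.2 _ (norm_mem_Icc _) _ (norm_mem_Icc _)).trans ?_
  have hM := hg.nonneg
  have : |‖t + (h : AddCircle (2:ℝ))‖ - ‖t‖| ≤ h := by
    refine (abs_norm_sub_norm_le _ _).trans ?_
    rw [add_sub_cancel_left]
    calc ‖(h : AddCircle (2:ℝ))‖ ≤ |h| := QuotientAddGroup.norm_mk_le_norm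
      _ = h := abs_of_nonneg hh
  gcongr

/-- Translating by `a` multiplies the `n`-th Fourier coefficient by the `n`-th character at `a`. -/
lemma fourierCoeff_shift_sub {f : AddCircle (2:ℝ) → ℂ} (hf : Continuous f) (a : AddCircle (2:ℝ))
    (n : ℤ) : fourierCoeff (fun t => f (t + a) - f t) n
      = (fourier n a - 1) * fourierCoeff f n := by
  have hint : ∀ φ : AddCircle (2:ℝ) → ℂ, Continuous φ →
      Integrable φ AddCircle.haarAddCircle := fun φ hφ =>
    hφ.integrable_of_hasCompactSupport (HasCompactSupport.of_compactSpace φ)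
  have key : ∫ t, fourier (-n) t * f (t + a) ∂AddCircle.haarAddCircle
      = fourier n a * ∫ t, fourier (-n) t * f t ∂AddCircle.haarAddCircle := by
    rw [← integral_const_mul,
      ← integral_add_right_eq_self (fun t => fourier n a * (fourier (-n) t * f t)) a]
    congr 1 with t
    have h1 : fourier (-n) (t + a) = fourier (-n) t * fourier (-n) a := by
      simp [fourier_apply, smul_add, AddCircle.toCircle_add]
    have h2 : fourier n a * fourier (-n) a = 1 := by
      rw [← fourier_add]; simp
    rw [h1]
    linear_combination (-(fourier (-n) t * f (t + a))) * h2
  simp only [fourierCoeff, smul_eq_mul, mul_sub]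
  rw [integral_sub (hint _ (by fun_prop)) (hint _ (by fun_prop)), key]
  ring

/-- Bessel's inequality over the nonnegative frequencies, for a function with sup norm at most `B`. -/
lemma sum_sq_fourierCoeff_le {f : AddCircle (2:ℝ) → ℂ} (hf : Continuous f) {B : ℝ}
    (hB : ∀ t, ‖f t‖ ≤ B) (s : Finset ℕ) :
    ∑ n ∈ s, ‖fourierCoeff f (n : ℤ)‖ ^ 2 ≤ B ^ 2 := by
  set F : C(AddCircle (2:ℝ), ℂ) := ⟨f, hf⟩
  have hs := hasSum_sq_fourierCoeff (ContinuousMap.toLp 2 AddCircle.haarAddCircle ℂ F)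
  have h1 := sum_le_hasSum (s.map Nat.castEmbedding) (fun _ _ => by positivity) hs
  rw [Finset.sum_map] at h1
  simp only [fourierCoeff_toLp, Nat.castEmbedding_apply] at h1
  refine h1.trans ?_
  have h2 : ∫ t, ‖(ContinuousMap.toLp 2 AddCircle.haarAddCircle ℂ F) t‖ ^ 2
      ∂AddCircle.haarAddCircle = ∫ t, ‖f t‖ ^ 2 ∂(AddCircle.haarAddCircle (T := 2)) := by
    apply integral_congr_ae
    filter_upwards [ContinuousMap.coeFn_toLp (p := 2) (𝕜 := ℂ)
      (AddCircle.haarAddCircle (T := 2)) F] with t ht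
    rw [ht]; rfl
  rw [h2]
  calc ∫ t, ‖f t‖ ^ 2 ∂(AddCircle.haarAddCircle (T := 2))
      ≤ ∫ _, B ^ 2 ∂(AddCircle.haarAddCircle (T := 2)) := by
        apply integral_mono_of_nonneg
        · exact Filter.Eventually.of_forall fun t => by positivity
        · exact integrable_const _
        · exact Filter.Eventually.of_forall fun t => by
            simp only; gcongr; exact hB t
    _ = B ^ 2 := by simp

/-- For `2^j ≤ n < 2^(j+1)` and `h = 2^{-(j+1)}` the angle `πnh` lies in `[π/2, π)`, so the shift
by `h` moves the `n`-th character by at least `1`. -/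
lemma one_le_norm_fourier_sub {j n : ℕ} (h1 : 2 ^ j ≤ n) (h2 : n < 2 ^ (j + 1)) :
    1 ≤ ‖fourier (n : ℤ) (((2 ^ (j + 1))⁻¹ : ℝ) : AddCircle (2:ℝ)) - 1‖ := by
  have h1' : (2:ℝ) ^ j ≤ n := by exact_mod_cast h1
  have h2' : (n:ℝ) ≤ 2 ^ (j + 1) := by exact_mod_cast h2.le
  set θ : ℝ := π * (n * (2 ^ (j + 1))⁻¹) with hθ
  have hp : (0:ℝ) < 2 ^ (j + 1) := by positivity
  have h3 : 1 / 2 ≤ (n:ℝ) * (2 ^ (j + 1))⁻¹ := by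
    rw [← div_eq_mul_inv, le_div_iff₀ hp, pow_succ]; linarith
  have h4 : (n:ℝ) * (2 ^ (j + 1))⁻¹ ≤ 1 := by
    rw [← div_eq_mul_inv, div_le_iff₀ hp]; linarith
  have hcos : Real.cos θ ≤ 0 := by
    apply Real.cos_nonpos_of_pi_div_two_le_of_le <;> nlinarith [Real.pi_pos]
  have : fourier (n : ℤ) (((2 ^ (j + 1))⁻¹ : ℝ) : AddCircle (2:ℝ))
      = Complex.exp (θ * Complex.I) := by
    rw [fourier_coe_apply, hθ]
    congr 1
    push_cast
    ring
  rw [this]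
  refine le_trans ?_ (Complex.abs_re_le_norm _)
  rw [Complex.sub_re, Complex.exp_ofReal_mul_I_re, Complex.one_re]
  rw [abs_of_nonpos (by linarith)]
  linarith

/-- Decay of a dyadic block of Fourier coefficients, from Bessel's inequality applied to the
increment `t ↦ f (t + h) - f t`. -/
lemma sum_block_le {δ M : ℝ} (hδ : 0 < δ) {g : ℝ → ℝ} (hg : HolderBd δ M g) (j : ℕ) :
    ∑ n ∈ Finset.Ico (2 ^ j) (2 ^ (j + 1)), ‖fourierCoeff (evenExt g) ((n : ℕ) : ℤ)‖ ^ 2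
      ≤ (M * ((2 ^ (j + 1))⁻¹ : ℝ) ^ δ) ^ 2 := by
  have hc := continuous_evenExt hg.1
  refine le_trans (Finset.sum_le_sum fun n hn => ?_) (sum_sq_fourierCoeff_le
    (f := fun t => evenExt g (t + (((2 ^ (j + 1))⁻¹ : ℝ) : AddCircle (2:ℝ))) - evenExt g t)
    (by fun_prop) (norm_evenExt_shift_le hδ hg (by positivity)) _)
  rw [Finset.mem_Ico] at hn
  rw [fourierCoeff_shift_sub hc, norm_mul, mul_pow]
  have := one_le_norm_fourier_sub hn.1 hn.2
  exact le_mul_of_one_le_left (by positivity) (one_le_pow₀ this)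

/-- The cosine coefficients of `g` are controlled by the Fourier coefficients of its even
extension. -/
lemma sq_cco_le {g : ℝ → ℝ} (hg : ContinuousOn g (Icc 0 1)) (k : ℕ) :
    cco g k ^ 2 ≤ 2 * ‖fourierCoeff (evenExt g) ((k + 1 : ℕ) : ℤ)‖ ^ 2 := by
  set G : ℝ → ℝ := fun x => g ‖(x : AddCircle (2:ℝ))‖ with hG
  have hGc : Continuous G :=
    hg.comp_continuous (continuous_norm.comp (AddCircle.continuous_mk' 2)) fun _ => norm_mem_Icc _
  set φ : ℝ → ℝ := fun x => G x * Real.cos (((k : ℝ) + 1) * π * x) with hφ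
  have hφc : Continuous φ := by fun_prop
  have hre : (fourierCoeff (evenExt g) ((k + 1 : ℕ) : ℤ)).re = ∫ x in (0:ℝ)..1, φ x := by
    have hFc : Continuous fun x : ℝ =>
        fourier (-((k + 1 : ℕ) : ℤ)) (x : AddCircle (2:ℝ)) • evenExt g (x : AddCircle (2:ℝ)) := by
      have := continuous_evenExt hg
      have h2 := AddCircle.continuous_mk' (2:ℝ)
      exact ((fourier (-((k + 1 : ℕ) : ℤ))).continuous.comp h2).smul (this.comp h2)
    rw [fourierCoeff_eq_intervalIntegral _ _ (-1), Complex.real_smul, Complex.re_ofReal_mul]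
    have e := Complex.reCLM.intervalIntegral_comp_comm
      (hFc.intervalIntegrable (μ := volume) (-1) (-1 + 2))
    simp only [Complex.reCLM_apply] at e
    rw [← e]
    have e2 : ∀ x : ℝ, (fourier (-((k + 1 : ℕ) : ℤ)) (x : AddCircle (2:ℝ)) •
        evenExt g (x : AddCircle (2:ℝ))).re = φ x := by
      intro x
      have : fourier (-((k + 1 : ℕ) : ℤ)) (x : AddCircle (2:ℝ))
          = Complex.exp (((-(((k : ℝ) + 1) * π * x) : ℝ) : ℂ) * Complex.I) := by
        rw [fourier_coe_apply]
        congr 1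
        push_cast
        ring
      rw [this, evenExt, smul_eq_mul, Complex.re_mul_ofReal, Complex.exp_ofReal_mul_I_re,
        Real.cos_neg, mul_comm]
    simp only [e2]
    have heven : ∀ x, φ (-x) = φ x := by
      intro x
      simp [hφ, hG]
    have e3 : ∫ x in (-1:ℝ)..0, φ x = ∫ x in (0:ℝ)..1, φ x := by
      have := intervalIntegral.integral_comp_neg (a := 0) (b := 1) φ
      simp only [heven, neg_zero] at this
      exact this.symm
    rw [show (-1:ℝ) + 2 = 1 by norm_num, ← intervalIntegral.integral_add_adjacent_intervals
      (hφc.intervalIntegrable (-1) 0) (hφc.intervalIntegrable 0 1), e3]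
    ring
  have hcco : cco g k = √2 * ∫ x in (0:ℝ)..1, φ x := by
    rw [cco, ← intervalIntegral.integral_const_mul]
    apply intervalIntegral.integral_congr
    intro x hx
    rw [uIcc_of_le zero_le_one] at hx
    have : ‖(x : AddCircle (2:ℝ))‖ = x := by
      rw [(AddCircle.norm_coe_eq_abs_iff 2 two_ne_zero).2, abs_of_nonneg hx.1]
      rw [abs_of_nonneg hx.1]; simpa using hx.2
    simp only [hφ, hG, this]
    ring
  rw [hcco, ← hre, mul_pow, Real.sq_sqrt zero_le_two]
  rw [← sq_abs (Complex.re _)]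
  gcongr
  exact Complex.abs_re_le_norm _

/-! ### Hölder regularity implies weighted square summability -/

/-- The embedding of `C^δ` into the cosine-Sobolev space of order `s/2 < δ`, obtained by summing
the dyadic blocks as a geometric series. Partial sums are bounded, so the `tsum` is a true sum. -/
lemma tsum_cco_le {s δ : ℝ} (hs : 0 ≤ s) (hδ : 0 < δ) (hsδ : s < 2 * δ) : ∃ D ≥ 0,
    ∀ (g : ℝ → ℝ) (M : ℝ), HolderBd δ M g →
      ∑' k : ℕ, (((k : ℝ) + 1) * π) ^ s * cco g k ^ 2 ≤ D * M ^ 2 := by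
  -- the block `2^j ≤ n < 2^(j+1)` contributes at most `2 π^s M² r^(j+1)`
  set r : ℝ := (2:ℝ) ^ (s - 2 * δ) with hr
  have hr0 : 0 < r := by positivity
  have hr1 : r < 1 := Real.rpow_lt_one_of_one_lt_of_neg one_lt_two (by linarith)
  refine ⟨2 * π ^ s * (1 - r)⁻¹, by
    have : 0 < 1 - r := by linarith
    positivity, fun g M hg => ?_⟩
  set c : ℕ → ℝ := fun n => ‖fourierCoeff (evenExt g) ((n : ℕ) : ℤ)‖ ^ 2 with hc
  set a : ℕ → ℝ := fun n => 2 * π ^ s * ((n : ℝ) ^ s * c n) with ha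
  have ha0 : ∀ n, 0 ≤ a n := fun n => by positivity
  have hterm : ∀ k : ℕ, (((k : ℝ) + 1) * π) ^ s * cco g k ^ 2 ≤ a (k + 1) := by
    intro k
    have := sq_cco_le hg.1 k
    rw [Real.mul_rpow (by positivity) Real.pi_pos.le]
    calc _ ≤ (((k : ℝ) + 1) ^ s * π ^ s) * (2 * c (k + 1)) := by gcongr
      _ = a (k + 1) := by simp only [ha]; push_cast; ring
  have hblock : ∀ j : ℕ, ∑ n ∈ Finset.Ico (2 ^ j) (2 ^ (j + 1)), a n
      ≤ 2 * π ^ s * M ^ 2 * r ^ j := by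
    intro j
    set X : ℝ := 2 ^ (j + 1) with hX
    have hX0 : 0 < X := by positivity
    have h1 : ∀ n ∈ Finset.Ico (2 ^ j) (2 ^ (j + 1)), a n ≤ 2 * π ^ s * (X ^ s * c n) := by
      intro n hn
      have : (n : ℝ) ≤ X := by
        rw [hX]; exact_mod_cast (Finset.mem_Ico.1 hn).2.le
      simp only [ha]
      gcongr
    have hXr : X ^ s * (X⁻¹ ^ δ) ^ 2 = r ^ (j + 1) := by
      rw [Real.inv_rpow hX0.le, ← Real.rpow_neg hX0.le, ← Real.rpow_mul_natCast hX0.le,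
        ← Real.rpow_add hX0, hr, hX, ← Real.rpow_natCast, ← Real.rpow_mul_natCast two_pos.le,
        ← Real.rpow_mul two_pos.le]
      congr 1
      push_cast
      ring
    calc _ ≤ ∑ n ∈ Finset.Ico (2 ^ j) (2 ^ (j + 1)), 2 * π ^ s * (X ^ s * c n) :=
          Finset.sum_le_sum h1
      _ = 2 * π ^ s * (X ^ s * ∑ n ∈ Finset.Ico (2 ^ j) (2 ^ (j + 1)), c n) := by
          simp only [Finset.mul_sum]
      _ ≤ 2 * π ^ s * (X ^ s * (M * X⁻¹ ^ δ) ^ 2) := by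
          gcongr
          exact sum_block_le hδ hg j
      _ = 2 * π ^ s * M ^ 2 * r ^ (j + 1) := by
          rw [← hXr]; ring
      _ ≤ 2 * π ^ s * M ^ 2 * r ^ j := by
          gcongr 2 * π ^ s * M ^ 2 * ?_
          exact pow_le_pow_of_le_one hr0.le hr1.le (Nat.le_succ j)
  have hdyadic : ∀ J : ℕ, ∑ n ∈ Finset.Ico 1 (2 ^ J), a n
      ≤ ∑ j ∈ Finset.range J, 2 * π ^ s * M ^ 2 * r ^ j := by
    intro J
    induction J with
    | zero => simp
    | succ J ih =>
      rw [← Finset.sum_Ico_consecutive _ (Nat.one_le_two_pow (n := J))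
        (Nat.pow_le_pow_right two_pos (Nat.le_succ J)), Finset.sum_range_succ]
      exact add_le_add ih (hblock J)
  apply Real.tsum_le_of_sum_range_le
  · intro k
    positivity
  intro J
  calc _ ≤ ∑ k ∈ Finset.range J, a (k + 1) := Finset.sum_le_sum fun k _ => hterm k
    _ = ∑ n ∈ Finset.Ico 1 (J + 1), a n := by
        rw [Finset.sum_Ico_eq_sum_range]
        simp [add_comm]
    _ ≤ ∑ n ∈ Finset.Ico 1 (2 ^ J), a n :=
        Finset.sum_le_sum_of_subset_of_nonneg
          (Finset.Ico_subset_Ico_right (Nat.lt_two_pow_self (n := J))) fun n _ _ => ha0 n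
    _ ≤ _ := hdyadic J
    _ = 2 * π ^ s * M ^ 2 * ∑ j ∈ Finset.range J, r ^ j := by rw [Finset.mul_sum]
    _ ≤ 2 * π ^ s * M ^ 2 * (1 - r)⁻¹ := by
        gcongr
        rw [← tsum_geometric_of_lt_one hr0.le hr1]
        exact (summable_geometric_of_lt_one hr0.le hr1).sum_le_tsum _ fun _ _ => by positivity
    _ = _ := by ring

/-! ### The local Lipschitz estimate -/

/-- local Lipschitz estimate for `F(u) = ∂ₓ f(u)` from `C^δ` to `H^{-α/2}₂`. -/
theorem stmt8 (α δ : ℝ) (hα : α ∈ Set.Ioc (1:ℝ) 2) (hδ : δ ∈ Set.Ioo (1 - α/2) 1)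
    (f : Polynomial ℝ) :
    ∀ R > 0, ∃ C > 0, ∀ u v : ℝ → ℝ, memC δ u → memC δ v →
      cNorm δ u ≤ R → cNorm δ v ≤ R →
      dxHNorm α (fun x => f.eval (u x) - f.eval (v x))
        ≤ C * cNorm δ (fun x => u x - v x) := by
  intro R _
  have hδ0 : 0 < δ := by linarith [hδ.1, hα.2]
  obtain ⟨D, hD, hsum⟩ := tsum_cco_le (s := 2 - α) (by linarith [hα.2]) hδ0
    (by linarith [hδ.1])
  obtain ⟨K, hK, hf⟩ := holderBd_eval_sub δ R f
  -- the summand `1` only makes the constant strictly positive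
  refine ⟨√D * K + 1, by positivity, fun u v hu hv huR hvR => ?_⟩
  have hN := (hu.sub hv).holderBd hδ0.ne'
  have hN0 := hN.nonneg
  have hg := (hf u v _ ((hu.holderBd hδ0.ne').mono huR) ((hv.holderBd hδ0.ne').mono hvR) hN).2
  set N := cNorm δ (fun x => u x - v x)
  calc _ ≤ √(D * (K * N) ^ 2) := Real.sqrt_le_sqrt (hsum _ _ hg)
    _ = √D * (K * N) := by rw [Real.sqrt_mul hD, Real.sqrt_sq (by positivity)]
    _ ≤ (√D * K + 1) * N := by linarith
end
end

section
/- Fix 0 < T < ∞ and α ∈ (7/4, 2). For each N ≥ 1 let v^N: [0,T] → L²(0,1) be continuous with sup_N sup_{t∈[0,T]} |v^N(t)|_{L²} < ∞, and define y^N(t) := Σ_{k=1}^N (∫₀ᵗ e^{−(kπ)^α (t−s)} b_k^N(s) ds) e_k, where b_k^N(s) := −kπ ∫₀¹ v^N(s)(x)² √2·cos(kπx) dx (i.e. y^N(t) = ∫₀ᵗ e^{−A^{α/2}(t−s)} P_N ∂_x((v^N(s))²) ds). Then sup_N sup_{t∈[0,T]} |y^N(t)|_{L⁴(0,1)} < ∞.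 -/
/-!
The time integral is estimated mode by mode. Since `|⟨v², √2 cos(kπ·)⟩| ≤ √2 ‖v‖²` and
`∫₀ᵗ e^{-λ(t-s)} ds ≤ 1/λ`, the `k`-th coefficient of `y^N(t)` is at most
`√2 B² (kπ)^{1-α} ≤ √2 B² k^{-β}` with `β = α - 1 > 3/4`, uniformly in `N` and `t`
(`abs_integral_sq_mul_cos_le`, `abs_integral_exp_mul_le`).

It remains to bound sine polynomials with coefficients `O(k^{-β})` in `L⁴`, uniformly in the
degree (`lpNorm_four_sum_sineEig_le`). On a dyadic block of frequencies `2^j ≤ k < 2^(j+1)` the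
interpolation inequality `‖f‖₄⁴ ≤ ‖f‖_∞² ‖f‖₂²`, together with Parseval's identity for `‖f‖₂`,
gives `‖f_j‖₄ ≲ 2^{j(3/4-β)}` (`lpNorm_four_block_le`). By the triangle inequality in `L⁴` the
blocks add up to at most a geometric series of ratio `2^{3/4-β} < 1`.
-/

open Real MeasureTheory Set

noncomputable section

/-! ### Orthonormality and fourth moments of sine polynomials -/

/-- The functions `e_{k+1}` are orthonormal in `L²(0,1)`. -/
lemma integral_sineEig_mul (k l : ℕ) :
    ∫ x in (0:ℝ)..1, sineEig k x * sineEig l x = if k = l then 1 else 0 := by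
  have hcos : ∀ m : ℤ, ∫ x in (0:ℝ)..1, Real.cos ((m : ℝ) * Real.pi * x) =
      if m = 0 then 1 else 0 := by
    intro m
    by_cases hm : m = 0
    · simp [hm]
    · have hm' : (m : ℝ) * Real.pi ≠ 0 :=
        mul_ne_zero (by exact_mod_cast hm) Real.pi_ne_zero
      rw [intervalIntegral.integral_comp_mul_left (fun x => Real.cos x) hm', if_neg hm]
      simp [Real.sin_int_mul_pi]
  have hprod : ∀ x : ℝ, sineEig k x * sineEig l x =
      Real.cos ((((k : ℤ) - l : ℤ) : ℝ) * Real.pi * x) -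
        Real.cos ((((k : ℤ) + l + 2 : ℤ) : ℝ) * Real.pi * x) := by
    intro x
    have h2 : Real.sqrt 2 * Real.sqrt 2 = 2 := Real.mul_self_sqrt (by norm_num)
    have e1 : (((k : ℤ) - l : ℤ) : ℝ) * Real.pi * x =
        ((k : ℝ) + 1) * Real.pi * x - ((l : ℝ) + 1) * Real.pi * x := by push_cast; ring
    have e2 : (((k : ℤ) + l + 2 : ℤ) : ℝ) * Real.pi * x =
        ((k : ℝ) + 1) * Real.pi * x + ((l : ℝ) + 1) * Real.pi * x := by push_cast; ring
    rw [e1, e2, Real.cos_sub, Real.cos_add]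
    unfold sineEig
    linear_combination
      Real.sin (((k : ℝ) + 1) * Real.pi * x) * Real.sin (((l : ℝ) + 1) * Real.pi * x) * h2
  simp_rw [hprod]
  rw [intervalIntegral.integral_sub (Continuous.intervalIntegrable (by fun_prop) _ _)
    (Continuous.intervalIntegrable (by fun_prop) _ _), hcos, hcos,
    if_neg (by omega : ¬ ((k : ℤ) + l + 2 = 0)), sub_zero]
  congr 1
  simp only [eq_iff_iff]
  omega

@[fun_prop]
lemma continuous_sineEig (k : ℕ) : Continuous (sineEig k) := by
  unfold sineEig
  fun_prop

lemma integral_sq_sum_sineEig (S : Finset ℕ) (a : ℕ → ℝ) :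
    ∫ x in (0:ℝ)..1, (∑ k ∈ S, a k * sineEig k x) ^ 2 = ∑ k ∈ S, a k ^ 2 := by
  have h : ∀ x, (∑ k ∈ S, a k * sineEig k x) ^ 2 =
      ∑ k ∈ S, ∑ l ∈ S, a k * a l * (sineEig k x * sineEig l x) := by
    intro x
    rw [sq, Finset.sum_mul_sum]
    exact Finset.sum_congr rfl fun k _ => Finset.sum_congr rfl fun l _ => by ring
  simp_rw [h]
  rw [intervalIntegral.integral_finsetSum
    fun k _ => Continuous.intervalIntegrable (by fun_prop) _ _]
  refine Finset.sum_congr rfl fun k hk => ?_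
  rw [intervalIntegral.integral_finsetSum
    fun l _ => Continuous.intervalIntegrable (by fun_prop) _ _]
  simp_rw [intervalIntegral.integral_const_mul, integral_sineEig_mul]
  simp [hk, sq]

/-- Interpolation `‖f‖₄⁴ ≤ ‖f‖_∞² ‖f‖₂²` for a sine polynomial with `|S|` coefficients of size at
most `A`: here `‖f‖_∞ ≤ √2 A |S|` and `‖f‖₂² ≤ A² |S|`. -/
lemma integral_pow_four_sum_sineEig_le (S : Finset ℕ) (a : ℕ → ℝ) (A : ℝ)
    (hA : 0 ≤ A) (ha : ∀ k ∈ S, |a k| ≤ A) :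
    ∫ x in (0:ℝ)..1, (∑ k ∈ S, a k * sineEig k x) ^ 4 ≤ 2 * A ^ 4 * (S.card : ℝ) ^ 3 := by
  have hsup : ∀ x, (∑ k ∈ S, a k * sineEig k x) ^ 2 ≤ 2 * (A * S.card) ^ 2 := by
    intro x
    have h1 : |∑ k ∈ S, a k * sineEig k x| ≤ Real.sqrt 2 * (A * S.card) := by
      calc _ ≤ ∑ k ∈ S, |a k * sineEig k x| := Finset.abs_sum_le_sum_abs _ _
        _ ≤ ∑ k ∈ S, A * Real.sqrt 2 := by
            refine Finset.sum_le_sum fun k hk => ?_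
            rw [abs_mul]
            exact mul_le_mul (ha k hk) (abs_sineEig_le k x) (abs_nonneg _) hA
        _ = _ := by rw [Finset.sum_const, nsmul_eq_mul]; ring
    calc _ = |∑ k ∈ S, a k * sineEig k x| ^ 2 := (sq_abs _).symm
      _ ≤ (Real.sqrt 2 * (A * S.card)) ^ 2 := pow_le_pow_left₀ (abs_nonneg _) h1 2
      _ = _ := by rw [mul_pow, Real.sq_sqrt (by norm_num)]
  calc _ ≤ ∫ x in (0:ℝ)..1, 2 * (A * S.card) ^ 2 * (∑ k ∈ S, a k * sineEig k x) ^ 2 := by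
        refine intervalIntegral.integral_mono_on zero_le_one
          (Continuous.intervalIntegrable (by fun_prop) _ _)
          (Continuous.intervalIntegrable (by fun_prop) _ _) fun x _ => ?_
        calc (∑ k ∈ S, a k * sineEig k x) ^ 4
            = (∑ k ∈ S, a k * sineEig k x) ^ 2 * (∑ k ∈ S, a k * sineEig k x) ^ 2 := by ring
          _ ≤ _ := mul_le_mul_of_nonneg_right (hsup x) (sq_nonneg _)
    _ = 2 * (A * S.card) ^ 2 * ∑ k ∈ S, a k ^ 2 := by
        rw [intervalIntegral.integral_const_mul, integral_sq_sum_sineEig]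
    _ ≤ 2 * (A * S.card) ^ 2 * ∑ k ∈ S, A ^ 2 := by
        refine mul_le_mul_of_nonneg_left (Finset.sum_le_sum fun k hk => ?_) (by positivity)
        exact (sq_abs (a k)).symm.trans_le (pow_le_pow_left₀ (abs_nonneg _) (ha k hk) 2)
    _ = _ := by rw [Finset.sum_const, nsmul_eq_mul]; ring

/-! ### Dyadic decomposition in `L⁴` -/

lemma eLpNorm_four_eq_ofReal_lpNorm (f : ℝ → ℝ) (hf : Continuous f) :
    eLpNorm f 4 (volume.restrict (Set.Ioc (0:ℝ) 1)) = ENNReal.ofReal (lpNorm 4 f) := by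
  have hm : MemLp f 4 (volume.restrict (Set.Ioc (0:ℝ) 1)) := by
    obtain ⟨C, hC⟩ := (isCompact_Icc (a := (0:ℝ)) (b := 1)).exists_bound_of_continuousOn
      hf.continuousOn
    exact MemLp.of_bound hf.aestronglyMeasurable C
      (ae_restrict_of_forall_mem measurableSet_Ioc
        fun x hx => hC x (Set.Ioc_subset_Icc_self hx))
  rw [hm.eLpNorm_eq_integral_rpow_norm (by norm_num) (by norm_num)]
  unfold _root_.lpNorm
  rw [intervalIntegral.integral_of_le zero_le_one]
  simp

lemma lpNorm_four_sum_le {ι : Type*} (S : Finset ι) (f : ι → ℝ → ℝ)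
    (hf : ∀ i, Continuous (f i)) :
    lpNorm 4 (fun x => ∑ i ∈ S, f i x) ≤ ∑ i ∈ S, lpNorm 4 (f i) := by
  have hnn : ∀ g : ℝ → ℝ, 0 ≤ lpNorm 4 g := fun g => Real.rpow_nonneg
    (intervalIntegral.integral_nonneg zero_le_one
      fun x _ => Real.rpow_nonneg (abs_nonneg _) _) _
  have h := eLpNorm_sum_le (s := S) (p := 4) (f := f)
    (μ := volume.restrict (Set.Ioc (0:ℝ) 1))
    (fun i _ => (hf i).aestronglyMeasurable) (by norm_num)
  have e : (∑ i ∈ S, f i) = fun x => ∑ i ∈ S, f i x := by ext x; simp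
  rw [e, eLpNorm_four_eq_ofReal_lpNorm _ (by fun_prop),
    Finset.sum_congr rfl fun i _ => eLpNorm_four_eq_ofReal_lpNorm (f i) (hf i),
    ← ENNReal.ofReal_sum_of_nonneg fun i _ => hnn _] at h
  exact (ENNReal.ofReal_le_ofReal_iff (Finset.sum_nonneg fun i _ => hnn _)).1 h

/-- `L⁴` bound for one dyadic block of frequencies `2^j ≤ k + 1 < 2^(j+1)`, which has at
most `2^j` members. -/
lemma lpNorm_four_block_le (β M : ℝ) (hβ : 0 ≤ β) (hM : 0 ≤ M) (N j : ℕ) (a : ℕ → ℝ)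
    (ha : ∀ k, |a k| ≤ M * ((k : ℝ) + 1) ^ (-β)) :
    lpNorm 4 (fun x => ∑ k ∈ Finset.range N with Nat.log 2 (k + 1) = j, a k * sineEig k x) ≤
      2 * M * ((2:ℝ) ^ (3 / 4 - β)) ^ j := by
  set S := (Finset.range N).filter fun k => Nat.log 2 (k + 1) = j with hS
  have hlow : ∀ k ∈ S, 2 ^ j ≤ k + 1 ∧ k + 1 < 2 ^ (j + 1) := by
    intro k hk
    have hk' : Nat.log 2 (k + 1) = j := (Finset.mem_filter.1 hk).2
    exact ⟨hk' ▸ Nat.pow_log_le_self 2 (by omega), hk' ▸ Nat.lt_pow_succ_log_self (by norm_num) _⟩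
  have hcard : S.card ≤ 2 ^ j := by
    have hsub : S ⊆ Finset.Ico (2 ^ j - 1) (2 ^ (j + 1) - 1) := by
      intro k hk
      have := hlow k hk
      rw [Finset.mem_Ico]
      omega
    have := Finset.card_le_card hsub
    rw [Nat.card_Ico, pow_succ] at this
    omega
  set q : ℝ := (2:ℝ) ^ j with hq
  have hq0 : 0 < q := by positivity
  have hA : ∀ k ∈ S, |a k| ≤ M * q ^ (-β) := by
    intro k hk
    refine (ha k).trans (mul_le_mul_of_nonneg_left ?_ hM)
    refine Real.rpow_le_rpow_of_nonpos hq0 ?_ (by linarith)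
    rw [hq]
    exact_mod_cast (hlow k hk).1
  have hI := integral_pow_four_sum_sineEig_le S a (M * q ^ (-β)) (by positivity) hA
  have hr : ((2:ℝ) ^ (3 / 4 - β)) ^ j = q ^ (3 / 4 - β) := by
    rw [hq, ← Real.rpow_natCast, ← Real.rpow_natCast, ← Real.rpow_mul (by norm_num),
      ← Real.rpow_mul (by norm_num), mul_comm]
  have hq3 : (q ^ (-β)) ^ 4 * q ^ 3 = (q ^ (3 / 4 - β)) ^ 4 := by
    rw [← Real.rpow_natCast (q ^ (-β)), ← Real.rpow_natCast (q ^ (3 / 4 - β)),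
      ← Real.rpow_natCast q, ← Real.rpow_mul hq0.le, ← Real.rpow_mul hq0.le,
      ← Real.rpow_add hq0]
    congr 1
    push_cast
    ring
  have hfin : ∫ x in (0:ℝ)..1, (∑ k ∈ S, a k * sineEig k x) ^ 4 ≤
      (2 * M * q ^ (3 / 4 - β)) ^ 4 := by
    refine hI.trans ?_
    have hc : (S.card : ℝ) ^ 3 ≤ q ^ 3 := by
      refine pow_le_pow_left₀ (by positivity) ?_ 3
      rw [hq]
      exact_mod_cast hcard
    calc 2 * (M * q ^ (-β)) ^ 4 * (S.card : ℝ) ^ 3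
        ≤ 2 * (M * q ^ (-β)) ^ 4 * q ^ 3 := by gcongr
      _ = 2 * M ^ 4 * ((q ^ (-β)) ^ 4 * q ^ 3) := by ring
      _ = 2 * M ^ 4 * (q ^ (3 / 4 - β)) ^ 4 := by rw [hq3]
      _ ≤ 16 * M ^ 4 * (q ^ (3 / 4 - β)) ^ 4 := by gcongr; norm_num
      _ = _ := by ring
  have habs : ∀ y : ℝ, |y| ^ (4:ℝ) = y ^ 4 := by
    intro y
    rw [show (4:ℝ) = ((4:ℕ) : ℝ) by norm_num, Real.rpow_natCast]
    exact Even.pow_abs (by decide) y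
  unfold _root_.lpNorm
  simp_rw [habs]
  rw [hr]
  refine (Real.rpow_le_rpow (intervalIntegral.integral_nonneg zero_le_one
    fun x _ => by positivity) hfin (by norm_num)).trans_eq ?_
  rw [← Real.rpow_natCast, ← Real.rpow_mul (by positivity)]
  norm_num

/-- Sine polynomials whose `k`-th coefficients are `O(k^{-β})` with `β > 3/4` are bounded in
`L⁴`, uniformly in the degree. -/
lemma lpNorm_four_sum_sineEig_le (β M : ℝ) (hβ : 3 / 4 < β) (hM : 0 ≤ M) (N : ℕ) (a : ℕ → ℝ)
    (ha : ∀ k, |a k| ≤ M * ((k : ℝ) + 1) ^ (-β)) :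
    lpNorm 4 (fun x => ∑ k ∈ Finset.range N, a k * sineEig k x) ≤
      2 * M * (1 - (2:ℝ) ^ (3 / 4 - β))⁻¹ := by
  have hr0 : (0:ℝ) ≤ (2:ℝ) ^ (3 / 4 - β) := by positivity
  have hr1 : (2:ℝ) ^ (3 / 4 - β) < 1 :=
    Real.rpow_lt_one_of_one_lt_of_neg (by norm_num) (by linarith)
  have hsplit : (fun x => ∑ k ∈ Finset.range N, a k * sineEig k x) =
      fun x => ∑ j ∈ Finset.range (N + 1),
        ∑ k ∈ Finset.range N with Nat.log 2 (k + 1) = j, a k * sineEig k x := by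
    ext x
    refine (Finset.sum_fiberwise_of_maps_to (fun k hk => ?_) _).symm
    have h1 := Nat.log_le_self 2 (k + 1)
    rw [Finset.mem_range] at hk ⊢
    omega
  rw [hsplit]
  calc _ ≤ ∑ j ∈ Finset.range (N + 1), lpNorm 4 (fun x =>
          ∑ k ∈ Finset.range N with Nat.log 2 (k + 1) = j, a k * sineEig k x) :=
        lpNorm_four_sum_le _ (fun j x =>
          ∑ k ∈ Finset.range N with Nat.log 2 (k + 1) = j, a k * sineEig k x)
          fun j => by fun_prop
    _ ≤ ∑ j ∈ Finset.range (N + 1), 2 * M * ((2:ℝ) ^ (3 / 4 - β)) ^ j :=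
        Finset.sum_le_sum fun j _ => lpNorm_four_block_le β M (by linarith) hM N j a ha
    _ = 2 * M * ∑ j ∈ Finset.range (N + 1), ((2:ℝ) ^ (3 / 4 - β)) ^ j := by
        rw [Finset.mul_sum]
    _ ≤ 2 * M * (1 - (2:ℝ) ^ (3 / 4 - β))⁻¹ := by
        gcongr
        rw [← tsum_geometric_of_lt_one hr0 hr1]
        exact (summable_geometric_of_lt_one hr0 hr1).sum_le_tsum _ fun j _ => by positivity

/-! ### Bounds on the coefficients of `y^N(t)` -/

/-- `|⟨v², √2 cos((k+1)π·)⟩| ≤ √2 ‖v‖²`: only the `L¹` norm of `v²` enters. -/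
lemma abs_integral_sq_mul_cos_le (w : Lp ℝ 2 (volume.restrict (Set.Ioc (0:ℝ) 1))) (c : ℝ) :
    |∫ y in (0:ℝ)..1, (w y) ^ 2 * (Real.sqrt 2 * Real.cos (c * y))| ≤
      Real.sqrt 2 * ‖w‖ ^ 2 := by
  have hI : Integrable (fun y => (w y) ^ 2) (volume.restrict (Set.Ioc (0:ℝ) 1)) :=
    (Lp.memLp w).integrable_sq
  have hnorm : ‖w‖ ^ 2 = ∫ y in Set.Ioc (0:ℝ) 1, (w y) ^ 2 := by
    rw [← real_inner_self_eq_norm_sq, L2.inner_def]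
    simp [sq]
  rw [intervalIntegral.integral_of_le zero_le_one, hnorm, ← integral_const_mul,
    ← Real.norm_eq_abs]
  refine norm_integral_le_of_norm_le (hI.const_mul _) (Filter.Eventually.of_forall fun y => ?_)
  rw [Real.norm_eq_abs, abs_mul, abs_mul, abs_of_nonneg (sq_nonneg _),
    abs_of_nonneg (Real.sqrt_nonneg 2), mul_comm]
  gcongr
  exact mul_le_of_le_one_right (Real.sqrt_nonneg 2) (Real.abs_cos_le_one _)

lemma abs_integral_exp_mul_le (L D t : ℝ) (hL : 0 < L) (hD : 0 ≤ D) (ht : 0 ≤ t) (b : ℝ → ℝ)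
    (hb : ∀ s ∈ Set.Icc 0 t, |b s| ≤ D) :
    |∫ s in (0:ℝ)..t, Real.exp (-L * (t - s)) * b s| ≤ D / L := by
  have hF : ∫ s in (0:ℝ)..t, Real.exp (-L * (t - s)) * D = (1 - Real.exp (-L * t)) * (D / L) := by
    have hd : ∀ s ∈ Set.uIcc 0 t, HasDerivAt (fun s => Real.exp (-L * (t - s)) * (D / L))
        (Real.exp (-L * (t - s)) * D) s := by
      intro s _
      have h1 : HasDerivAt (fun s => -L * (t - s)) L s := by
        simpa using ((hasDerivAt_id s).const_sub t).const_mul (-L)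
      refine (h1.exp.mul_const (D / L)).congr_deriv ?_
      field_simp
    rw [intervalIntegral.integral_eq_sub_of_hasDerivAt hd
      (Continuous.intervalIntegrable (by fun_prop) _ _)]
    simp
    ring
  have h := intervalIntegral.norm_integral_le_of_norm_le (a := 0) (b := t) (μ := volume)
    (f := fun s => Real.exp (-L * (t - s)) * b s)
    (g := fun s => Real.exp (-L * (t - s)) * D) ht
    (Filter.Eventually.of_forall fun s hs => by
      rw [Real.norm_eq_abs, abs_mul, abs_of_pos (Real.exp_pos _)]
      gcongr
      exact hb s (Set.Ioc_subset_Icc_self hs))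
    (Continuous.intervalIntegrable (by fun_prop) _ _)
  rw [hF] at h
  refine h.trans (mul_le_of_le_one_left (by positivity) ?_)
  linarith [Real.exp_pos (-L * t)]

/-- uniform `L⁴` bound for the Burgers nonlinear convolution term. -/
theorem stmt15 (T α : ℝ) (hT : 0 < T) (hα : α ∈ Set.Ioo (7/4 : ℝ) 2)
    (v : ℕ → ℝ → Lp ℝ 2 (volume.restrict (Set.Ioc (0:ℝ) 1)))
    (hcont : ∀ N : ℕ, ContinuousOn (v N) (Set.Icc 0 T))
    (hbdd : ∃ B : ℝ, ∀ N : ℕ, 1 ≤ N → ∀ t ∈ Set.Icc (0:ℝ) T, ‖v N t‖ ≤ B) :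
    ∃ B : ℝ, ∀ N : ℕ, 1 ≤ N → ∀ t ∈ Set.Icc (0:ℝ) T,
      lpNorm 4 (fun x => ∑ k ∈ Finset.range N,
        (∫ s in (0:ℝ)..t, Real.exp (-(((k : ℝ) + 1) * Real.pi) ^ α * (t - s)) *
          (-(((k : ℝ) + 1) * Real.pi) *
            ∫ y in (0:ℝ)..1, (v N s y) ^ 2 *
              (Real.sqrt 2 * Real.cos (((k : ℝ) + 1) * Real.pi * y)))) *
        sineEig k x) ≤ B := by
  obtain ⟨hα1, hα2⟩ := hα
  obtain ⟨B, hB⟩ := hbdd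
  refine ⟨2 * (Real.sqrt 2 * B ^ 2) * (1 - (2:ℝ) ^ (3 / 4 - (α - 1)))⁻¹, fun N hN t ht => ?_⟩
  refine lpNorm_four_sum_sineEig_le (α - 1) (Real.sqrt 2 * B ^ 2) (by linarith)
    (by positivity) N _ fun k => ?_
  set lam : ℝ := ((k : ℝ) + 1) * Real.pi with hlam
  have hk : (0:ℝ) < (k : ℝ) + 1 := by positivity
  have hlam0 : 0 < lam := mul_pos hk Real.pi_pos
  have hle : (k : ℝ) + 1 ≤ lam := by
    rw [hlam]
    exact le_mul_of_one_le_right hk.le (by linarith [Real.pi_gt_three])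
  refine (abs_integral_exp_mul_le (lam ^ α) (lam * (Real.sqrt 2 * B ^ 2)) t
    (by positivity) (by positivity) ht.1 _ fun s hs => ?_).trans ?_
  · rw [abs_mul, abs_neg, abs_of_pos hlam0]
    gcongr
    refine (abs_integral_sq_mul_cos_le (v N s) lam).trans ?_
    gcongr
    exact hB N hN s ⟨hs.1, hs.2.trans ht.2⟩
  · calc lam * (Real.sqrt 2 * B ^ 2) / lam ^ α = Real.sqrt 2 * B ^ 2 * lam ^ (-(α - 1)) := by
          rw [neg_sub, Real.rpow_sub hlam0, Real.rpow_one]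
          ring
      _ ≤ Real.sqrt 2 * B ^ 2 * ((k : ℝ) + 1) ^ (-(α - 1)) := by
          gcongr ?_ * ?_
          exact Real.rpow_le_rpow_of_nonpos hk hle (by linarith)
end
end
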